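/- In the setting of the dgl (L₁, D) built from minimal Quillen models of 2-cones, for all A, B, C ∈ 𝕄(V₀) and T ∈ 𝕃(W₀), the star product of the Jacobiator with T is a boundary of a triple-derivation term: J(A,B,C) ⋆ T = (−1)^{|B|} D(σ_Ā σ_B̄ σ_C̄ (T)), where J(A,B,C) = A(BC) − (AB)C − (−1)^{|A||B|} B(AC) ∈ 𝕄(V₀). -/

import Mathlib

universe u

/-- A graded Lie algebra over `ℚ`: a `ℤ`-graded vector space with a bilinear bracket
satisfying graded antisymmetry and the graded Jacobi identity on homogeneous elements. -/
structure GLA (Lc : Type u) [AddCommGroup Lc] [Module ℚ Lc] where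
  grade : ℤ → Submodule ℚ Lc
  internal : DirectSum.IsInternal grade
  br : Lc →ₗ[ℚ] Lc →ₗ[ℚ] Lc
  br_mem : ∀ {i j : ℤ} {x y : Lc}, x ∈ grade i → y ∈ grade j → br x y ∈ grade (i + j)
  antisymm : ∀ {i j : ℤ} {x y : Lc}, x ∈ grade i → y ∈ grade j →
      br x y = -((-1 : ℚ) ^ (i * j) • br y x)
  jacobi : ∀ {i j : ℤ} {x y : Lc} (z : Lc), x ∈ grade i → y ∈ grade j →
      br x (br y z) = br (br x y) z + (-1 : ℚ) ^ (i * j) • br y (br x z)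

namespace GLA

variable {Lc : Type u} [AddCommGroup Lc] [Module ℚ Lc]

/-- The Lie subalgebra (as a submodule closed under the bracket) generated by
a graded family of subspaces. -/
def lieSub (G : GLA Lc) (p : ℤ → Submodule ℚ Lc) : Submodule ℚ Lc :=
  sInf {q | (∀ i, p i ≤ q) ∧ ∀ x ∈ q, ∀ y ∈ q, G.br x y ∈ q}

/-- The submodule of decomposable elements of `L`: the span of all brackets. -/
def dec (G : GLA Lc) : Submodule ℚ Lc :=
  Submodule.span ℚ {x : Lc | ∃ a b : Lc, x = G.br a b}

/-- A graded Lie algebra is reduced if it vanishes in degrees `≤ 0`. -/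
def Reduced (G : GLA Lc) : Prop := ∀ i : ℤ, i ≤ 0 → G.grade i = ⊥

end GLA


/-- Trees of the free graded linear magma on the graded subspace family `P`
(homogeneous generators and formal binary products). -/
inductive Mag {Lc : Type u} [AddCommGroup Lc] [Module ℚ Lc]
    (P : ℤ → Submodule ℚ Lc) : Type u
  | of (i : ℤ) (v : Lc) (hv : v ∈ P i) : Mag P
  | mul : Mag P → Mag P → Mag P

namespace Mag

variable {Lc : Type u} [AddCommGroup Lc] [Module ℚ Lc] {P : ℤ → Submodule ℚ Lc}

/-- Degree of a magma element. -/
def deg : Mag P → ℤ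
  | of i _ _ => i
  | mul A B => deg A + deg B

/-- The class of a magma element in the (free) graded Lie algebra. -/
def real (G : GLA Lc) : Mag P → Lc
  | of _ v _ => v
  | mul A B => G.br (real G A) (real G B)

/-- The star operator `⋆ : 𝕄(V) ⊗ 𝕃(W) → L`, applied to a homogeneous element `T`
of degree `t`, defined recursively by `a ⋆ T = 0` for a generator `a` and
`AB ⋆ T = (-1)^{|A|} σ_Ā σ_B̄ (T) + (-1)^{|B||T|} [A ⋆ T, B̄] + [Ā, B ⋆ T]`. -/
def star (G : GLA Lc) (sg : ℤ → Lc → (Lc →ₗ[ℚ] Lc)) (t : ℤ) : Mag P → Lc → Lc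
  | of _ _ _, _ => 0
  | mul A B, T =>
      (-1 : ℚ) ^ deg A • sg (deg A) (real G A) (sg (deg B) (real G B) T)
        + (-1 : ℚ) ^ (deg B * t) • G.br (star G sg t A T) (real G B)
        + G.br (real G A) (star G sg t B T)

end Mag

/-!
Write `δ_A = [D, σ_A]` for the boundary of `σ_A` in the dgl of derivations. On the generators `V`,
`W` and `s(V ⊗ W)`, hence on everything they generate, `[δ_A, σ_B] = -(-1)^|A| σ_[A,B]`, while
`δ_A = [A, -]` on `𝕃(W)`. Moving `D` to the right through `σ_A σ_B σ_C` by means of these two facts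
leaves six terms. They are the six terms of `J(A,B,C) ⋆ T` in which derivations `σ` occur; the
remaining ones are brackets with `A ⋆ T`, `B ⋆ T` and `C ⋆ T`, and cancel by the Jacobi identity.
-/

theorem neg_one_zpow_add {K : Type*} [DivisionRing K] (m n : ℤ) :
    (-1 : K) ^ (m + n) = (-1) ^ m * (-1) ^ n :=
  zpow_add₀ (neg_ne_zero.2 one_ne_zero) m n

namespace GLA

variable {Lc : Type u} [AddCommGroup Lc] [Module ℚ Lc] {G : GLA Lc} {p : ℤ → Submodule ℚ Lc}

theorem mem_lieSub_of_mem {i : ℤ} {x : Lc} (hx : x ∈ p i) : x ∈ G.lieSub p :=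
  Submodule.mem_sInf.2 fun _ hq => hq.1 i hx

theorem br_mem_lieSub {x y : Lc} (hx : x ∈ G.lieSub p) (hy : y ∈ G.lieSub p) :
    G.br x y ∈ G.lieSub p :=
  Submodule.mem_sInf.2 fun q hq =>
    hq.2 x (Submodule.mem_sInf.1 hx q hq) y (Submodule.mem_sInf.1 hy q hq)

theorem lieSub_mono {q : ℤ → Submodule ℚ Lc} (hpq : ∀ i, p i ≤ q i) : G.lieSub p ≤ G.lieSub q :=
  sInf_le ⟨fun i _ hx => mem_lieSub_of_mem (hpq i hx), fun _ hx _ hy => br_mem_lieSub hx hy⟩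

theorem lieSub_le_of_homogeneous (hp : ∀ i, p i ≤ G.grade i) {r : Submodule ℚ Lc}
    (hpr : ∀ i, p i ≤ r)
    (hbr : ∀ {i j : ℤ} {x y : Lc}, x ∈ G.grade i → y ∈ G.grade j → x ∈ r → y ∈ r → G.br x y ∈ r) :
    G.lieSub p ≤ r := by
  let s : Set Lc := {x | (∃ n, x ∈ G.grade n) ∧ x ∈ r}
  have br_mem_span : ∀ x ∈ s, ∀ y ∈ s, G.br x y ∈ Submodule.span ℚ s :=
    fun _ ⟨⟨_, hx⟩, hxr⟩ _ ⟨⟨_, hy⟩, hyr⟩ =>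
      Submodule.subset_span ⟨⟨_, G.br_mem hx hy⟩, hbr hx hy hxr hyr⟩
  have span_closed : ∀ x ∈ Submodule.span ℚ s, ∀ y ∈ Submodule.span ℚ s,
      G.br x y ∈ Submodule.span ℚ s :=
    fun x hx y hy =>
      LinearMap.BilinMap.apply_apply_mem_of_mem_span _ s s G.br br_mem_span x y hx hy
  calc G.lieSub p ≤ Submodule.span ℚ s :=
        sInf_le ⟨fun i x hx => Submodule.subset_span ⟨⟨i, hp i hx⟩, hpr i hx⟩, span_closed⟩
    _ ≤ r := Submodule.span_le.2 fun _ hx => hx.2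

/-- The degree `a` part of the Lie subalgebra generated by `p`. -/
def lieSubGrade (G : GLA Lc) (p : ℤ → Submodule ℚ Lc) (a : ℤ) : Submodule ℚ Lc :=
  G.lieSub p ⊓ G.grade a

theorem mem_lieSubGrade_of_mem (hp : ∀ i, p i ≤ G.grade i) {i : ℤ} {x : Lc} (hx : x ∈ p i) :
    x ∈ G.lieSubGrade p i :=
  ⟨mem_lieSub_of_mem hx, hp i hx⟩

theorem br_mem_lieSubGrade {a b : ℤ} {x y : Lc} (hx : x ∈ G.lieSubGrade p a)
    (hy : y ∈ G.lieSubGrade p b) : G.br x y ∈ G.lieSubGrade p (a + b) :=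
  ⟨br_mem_lieSub hx.1 hy.1, G.br_mem hx.2 hy.2⟩

/-- The homogeneous derivations of degree `d`. -/
def der (G : GLA Lc) (d : ℤ) : Submodule ℚ (Module.End ℚ Lc) where
  carrier := {f | (∀ n, ∀ x ∈ G.grade n, f x ∈ G.grade (n + d)) ∧
    ∀ n, ∀ x ∈ G.grade n, ∀ y,
      f (G.br x y) = G.br (f x) y + (-1 : ℚ) ^ (d * n) • G.br x (f y)}
  zero_mem' := ⟨fun _ _ _ => zero_mem _, fun _ _ _ _ => by simp⟩
  add_mem' hf hg := by
    refine ⟨fun n x hx => add_mem (hf.1 n x hx) (hg.1 n x hx), fun n x hx y => ?_⟩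
    simp only [LinearMap.add_apply, hf.2 n x hx, hg.2 n x hx, map_add]
    module
  smul_mem' c f hf := by
    refine ⟨fun n x hx => Submodule.smul_mem _ c (hf.1 n x hx), fun n x hx y => ?_⟩
    simp only [LinearMap.smul_apply, hf.2 n x hx, map_smul]
    module

/-- The graded commutator of endomorphisms `f` and `g` of degrees `d` and `e`. -/
noncomputable def gradedCommutator (d e : ℤ) (f g : Module.End ℚ Lc) : Module.End ℚ Lc :=
  f * g - (-1 : ℚ) ^ (d * e) • (g * f)

theorem gradedCommutator_apply (d e : ℤ) (f g : Module.End ℚ Lc) (x : Lc) :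
    gradedCommutator d e f g x = f (g x) - (-1 : ℚ) ^ (d * e) • g (f x) := rfl

section Derivations

variable {d e : ℤ} {f g : Module.End ℚ Lc}

theorem apply_mem_grade_of_mem_der (hf : f ∈ G.der d) {n : ℤ} {x : Lc} (hx : x ∈ G.grade n) :
    f x ∈ G.grade (n + d) :=
  hf.1 n x hx

theorem apply_br_of_mem_der (hf : f ∈ G.der d) {n : ℤ} {x : Lc} (hx : x ∈ G.grade n) (y : Lc) :
    f (G.br x y) = G.br (f x) y + (-1 : ℚ) ^ (d * n) • G.br x (f y) :=
  hf.2 n x hx y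

theorem br_mem_der {a : ℤ} {x : Lc} (hx : x ∈ G.grade a) : G.br x ∈ G.der a :=
  ⟨fun n _ hy => add_comm a n ▸ G.br_mem hx hy, fun _ _ hy z => G.jacobi z hx hy⟩

theorem gradedCommutator_mem_der (hf : f ∈ G.der d) (hg : g ∈ G.der e) :
    gradedCommutator d e f g ∈ G.der (d + e) := by
  refine ⟨fun n x hx => ?_, fun n x hx y => ?_⟩
  · have hfg := apply_mem_grade_of_mem_der hf (apply_mem_grade_of_mem_der hg hx)
    have hgf := apply_mem_grade_of_mem_der hg (apply_mem_grade_of_mem_der hf hx)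
    rw [add_assoc, add_comm e d] at hfg
    rw [add_assoc] at hgf
    exact sub_mem hfg (Submodule.smul_mem _ _ hgf)
  · simp only [gradedCommutator_apply, apply_br_of_mem_der hf hx, apply_br_of_mem_der hg hx,
      apply_br_of_mem_der hf (apply_mem_grade_of_mem_der hg hx),
      apply_br_of_mem_der hg (apply_mem_grade_of_mem_der hf hx),
      map_add, map_sub, map_smul, LinearMap.sub_apply, LinearMap.smul_apply]
    rcases Int.even_or_odd d with hd | hd <;> rcases Int.even_or_odd e with he | he <;>
      rcases Int.even_or_odd n with hn | hn <;>
      simp only [neg_one_zpow_add, zpow_mul, mul_zpow, one_zpow,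
        hd.neg_one_zpow, he.neg_one_zpow, hn.neg_one_zpow] <;>
      module

theorem apply_eq_zero_of_mem_lieSub (hf : f ∈ G.der d) (hp : ∀ i, p i ≤ G.grade i)
    (hfp : ∀ {i : ℤ} {x : Lc}, x ∈ p i → f x = 0) {x : Lc} (hx : x ∈ G.lieSub p) : f x = 0 := by
  suffices G.lieSub p ≤ LinearMap.ker f from this hx
  refine lieSub_le_of_homogeneous hp (fun _ _ => hfp) fun {_ _ x y} hx _ hfx hfy => ?_
  rw [LinearMap.mem_ker] at hfx hfy ⊢
  simp [apply_br_of_mem_der hf hx, hfx, hfy]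

theorem apply_eq_apply_of_mem_lieSub (hf : f ∈ G.der d) (hg : g ∈ G.der d)
    (hp : ∀ i, p i ≤ G.grade i) (hfg : ∀ {i : ℤ} {x : Lc}, x ∈ p i → f x = g x) {x : Lc}
    (hx : x ∈ G.lieSub p) : f x = g x :=
  sub_eq_zero.1 <| apply_eq_zero_of_mem_lieSub (sub_mem hf hg) hp
    (fun hy => sub_eq_zero.2 (hfg hy)) hx

theorem apply_apply_eq_zero_of_mem_lieSub (hf : f ∈ G.der d) (hg : g ∈ G.der e)
    (hp : ∀ i, p i ≤ G.grade i) (hfp : ∀ {i : ℤ} {x : Lc}, x ∈ p i → f x = 0)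
    (hfgp : ∀ {i : ℤ} {x : Lc}, x ∈ p i → f (g x) = 0) {x : Lc} (hx : x ∈ G.lieSub p) :
    f (g x) = 0 := by
  have hcomm := apply_eq_zero_of_mem_lieSub (gradedCommutator_mem_der hf hg) hp
    (fun hy => by simp [gradedCommutator_apply, hfp hy, hfgp hy]) hx
  simpa [gradedCommutator_apply, apply_eq_zero_of_mem_lieSub hf hp hfp hx] using hcomm

end Derivations

end GLA

namespace Mag

variable {Lc : Type u} [AddCommGroup Lc] [Module ℚ Lc] {G : GLA Lc} {P : ℤ → Submodule ℚ Lc}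

theorem real_mem_lieSubGrade (hP : ∀ i, P i ≤ G.grade i) :
    ∀ A : Mag P, A.real G ∈ G.lieSubGrade P A.deg
  | of _ _ hv => GLA.mem_lieSubGrade_of_mem hP hv
  | mul A B => GLA.br_mem_lieSubGrade (real_mem_lieSubGrade hP A) (real_mem_lieSubGrade hP B)

variable {sg : ℤ → Lc → Module.End ℚ Lc} {t : ℤ} {T : Lc}

theorem star_mem_grade (hP : ∀ i, P i ≤ G.grade i)
    (hsg : ∀ (A : Mag P) {n : ℤ} {x : Lc}, x ∈ G.grade n →
      sg A.deg (A.real G) x ∈ G.grade (n + (A.deg + 1)))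
    (hT : T ∈ G.grade t) (A : Mag P) : A.star G sg t T ∈ G.grade (t + A.deg + 2) := by
  induction A with
  | of i v hv => exact zero_mem _
  | mul A B hA hB =>
    have hσσ : sg A.deg (A.real G) (sg B.deg (B.real G) T) ∈ G.grade (t + (A.deg + B.deg) + 2) := by
      convert hsg A (hsg B hT) using 2; ring
    have hAB : G.br (A.star G sg t T) (B.real G) ∈ G.grade (t + (A.deg + B.deg) + 2) := by
      convert G.br_mem hA (real_mem_lieSubGrade hP B).2 using 2; ring
    have hBA : G.br (A.real G) (B.star G sg t T) ∈ G.grade (t + (A.deg + B.deg) + 2) := by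
      convert G.br_mem (real_mem_lieSubGrade hP A).2 hB using 2; ring
    exact add_mem (add_mem (Submodule.smul_mem _ _ hσσ) (Submodule.smul_mem _ _ hAB)) hBA

theorem star_jacobiator (hP : ∀ i, P i ≤ G.grade i)
    (hsg : ∀ (A : Mag P) {n : ℤ} {x : Lc}, x ∈ G.grade n →
      sg A.deg (A.real G) x ∈ G.grade (n + (A.deg + 1)))
    (hT : T ∈ G.grade t) (A B C : Mag P) :
    (mul A (mul B C)).star G sg t T - (mul (mul A B) C).star G sg t T
        - (-1 : ℚ) ^ (A.deg * B.deg) • (mul B (mul A C)).star G sg t T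
      = (-1 : ℚ) ^ A.deg •
            sg A.deg (A.real G) (sg (B.deg + C.deg) (G.br (B.real G) (C.real G)) T)
        - (-1 : ℚ) ^ (A.deg + B.deg) •
            sg (A.deg + B.deg) (G.br (A.real G) (B.real G)) (sg C.deg (C.real G) T)
        - (-1 : ℚ) ^ (A.deg * B.deg + B.deg) •
            sg B.deg (B.real G) (sg (A.deg + C.deg) (G.br (A.real G) (C.real G)) T)
        + (-1 : ℚ) ^ B.deg •
            G.br (A.real G) (sg B.deg (B.real G) (sg C.deg (C.real G) T))
        - (-1 : ℚ) ^ (A.deg * B.deg + A.deg) •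
            G.br (B.real G) (sg A.deg (A.real G) (sg C.deg (C.real G) T))
        - (-1 : ℚ) ^ (C.deg * t + A.deg) •
            G.br (sg A.deg (A.real G) (sg B.deg (B.real G) T)) (C.real G) := by
  have hA := (real_mem_lieSubGrade hP A).2
  have hB := (real_mem_lieSubGrade hP B).2
  have jacobi_starA := G.jacobi (C.real G) (star_mem_grade hP hsg hT A) hB
  have jacobi_starB := G.jacobi (C.real G) hA (star_mem_grade hP hsg hT B)
  have jacobi_starC := G.jacobi (C.star G sg t T) hA hB
  simp only [star, deg, real, map_add, map_smul, LinearMap.add_apply, LinearMap.smul_apply,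
    jacobi_starA, jacobi_starB, jacobi_starC]
  rcases Int.even_or_odd A.deg with ha | ha <;> rcases Int.even_or_odd B.deg with hb | hb <;>
    rcases Int.even_or_odd C.deg with hc | hc <;> rcases Int.even_or_odd t with ht | ht <;>
    simp only [neg_one_zpow_add, zpow_mul, mul_zpow, one_zpow, even_two.neg_one_zpow,
      ha.neg_one_zpow, hb.neg_one_zpow, hc.neg_one_zpow, ht.neg_one_zpow] <;>
    module

end Mag

/-- The data on graded subspaces `V`, `W` and derivations `σ` and `D` from which the boundary
formula follows. Only `σ_A` for `A ∈ 𝕃(V)` and `σ_w` for `w ∈ W` are constrained. The suspension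
generator `s(v ⊗ w)` is encoded as `σ_v(w)`. -/
structure SuspensionDerivations {Lc : Type u} [AddCommGroup Lc] [Module ℚ Lc] (G : GLA Lc)
    (V W : ℤ → Submodule ℚ Lc) (sg : ℤ → Lc → Module.End ℚ Lc) (D : Module.End ℚ Lc) : Prop where
  V_le : ∀ i, V i ≤ G.grade i
  W_le : ∀ j, W j ≤ G.grade j
  sg_mem_der : ∀ {a : ℤ} {A : Lc}, A ∈ G.lieSubGrade V a → sg a A ∈ G.der (a + 1)
  sg_W_mem_der : ∀ {j : ℤ} {w : Lc}, w ∈ W j → sg j w ∈ G.der (j + 1)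
  sg_V_V : ∀ {i i' : ℤ} {v v' : Lc}, v ∈ V i → v' ∈ V i' → sg i v v' = 0
  sg_apply_V : ∀ {a i : ℤ} {A v : Lc}, A ∈ G.lieSubGrade V a → v ∈ V i →
    sg a A v = (-1 : ℚ) ^ (i * a) • sg i v A
  sg_apply_W : ∀ {a j : ℤ} {A w : Lc}, A ∈ G.lieSubGrade V a → w ∈ W j →
    sg a A w = (-1 : ℚ) ^ (j * a) • sg j w A
  sg_susp : ∀ {a i j : ℤ} {A v w : Lc}, A ∈ G.lieSubGrade V a → v ∈ V i → w ∈ W j →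
    sg a A (sg i v w) = 0
  D_mem_der : D ∈ G.der (-1)
  D_V : ∀ {i : ℤ} {v : Lc}, v ∈ V i → D v = 0
  D_W : ∀ {j : ℤ} {w : Lc}, w ∈ W j → D w = 0
  D_susp : ∀ {i j : ℤ} {v w : Lc}, v ∈ V i → w ∈ W j → D (sg i v w) = G.br v w

namespace SuspensionDerivations

open GLA

variable {Lc : Type u} [AddCommGroup Lc] [Module ℚ Lc] {G : GLA Lc} {V W : ℤ → Submodule ℚ Lc}
  {sg : ℤ → Lc → Module.End ℚ Lc} {D : Module.End ℚ Lc} {a b c : ℤ} {A B C T x : Lc}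

/-- The boundary `δ_A = [D, σ_A]` of `σ_A` in the dgl of derivations, of degree `a = |A|`. -/
noncomputable def sgBoundary (sg : ℤ → Lc → Module.End ℚ Lc) (D : Module.End ℚ Lc) (a : ℤ)
    (A : Lc) : Module.End ℚ Lc :=
  gradedCommutator (-1) (a + 1) D (sg a A)

theorem sgBoundary_apply :
    sgBoundary sg D a A x = D (sg a A x) + (-1 : ℚ) ^ a • sg a A (D x) := by
  rw [sgBoundary, gradedCommutator_apply, neg_one_mul, zpow_neg, neg_one_zpow_add]
  rcases Int.even_or_odd a with ha | ha <;> simp [ha.neg_one_zpow, sub_eq_add_neg]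

theorem sgBoundary_mem_der (h : SuspensionDerivations G V W sg D) (hA : A ∈ G.lieSubGrade V a) :
    sgBoundary sg D a A ∈ G.der a := by
  have hδ := gradedCommutator_mem_der h.D_mem_der (h.sg_mem_der hA)
  rwa [show -1 + (a + 1) = a by ring] at hδ

theorem sg_apply_lieSub_V (h : SuspensionDerivations G V W sg D) (hA : A ∈ G.lieSubGrade V a)
    (hx : x ∈ G.lieSub V) : sg a A x = 0 := by
  refine apply_eq_zero_of_mem_lieSub (h.sg_mem_der hA) h.V_le (fun {i v} hv => ?_) hx
  have hvA : sg i v A = 0 := apply_eq_zero_of_mem_lieSub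
    (h.sg_mem_der (mem_lieSubGrade_of_mem h.V_le hv)) h.V_le (h.sg_V_V hv) hA.1
  rw [h.sg_apply_V hA hv, hvA, smul_zero]

theorem D_apply_lieSub_W (h : SuspensionDerivations G V W sg D) (hT : T ∈ G.lieSub W) : D T = 0 :=
  apply_eq_zero_of_mem_lieSub h.D_mem_der h.W_le h.D_W hT

theorem sg_W_V (h : SuspensionDerivations G V W sg D) {i j : ℤ} {v w : Lc} (hv : v ∈ V i)
    (hw : w ∈ W j) : sg j w v = (-1 : ℚ) ^ (j * i) • sg i v w := by
  rw [h.sg_apply_W (mem_lieSubGrade_of_mem h.V_le hv) hw, smul_smul, ← mul_zpow]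
  simp

theorem sg_br_left (h : SuspensionDerivations G V W sg D) (hA : A ∈ G.lieSubGrade V a)
    (hB : B ∈ G.lieSubGrade V b) (x : Lc) :
    sg a A (G.br B x) = (-1 : ℚ) ^ ((a + 1) * b) • G.br B (sg a A x) := by
  simp [apply_br_of_mem_der (h.sg_mem_der hA) hB.2, h.sg_apply_lieSub_V hA hB.1]

theorem apply_sg_W_eq_zero (h : SuspensionDerivations G V W sg D) {d : ℤ} {f : Module.End ℚ Lc}
    (hf : f ∈ G.der d) (hfV : ∀ {i : ℤ} {v : Lc}, v ∈ V i → f v = 0)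
    (hfS : ∀ {i j : ℤ} {v w : Lc}, v ∈ V i → w ∈ W j → f (sg i v w) = 0)
    (hC : C ∈ G.lieSubGrade V c) {j : ℤ} {w : Lc} (hw : w ∈ W j) : f (sg c C w) = 0 := by
  have hfσw : f (sg j w C) = 0 :=
    apply_apply_eq_zero_of_mem_lieSub hf (h.sg_W_mem_der hw) h.V_le hfV
      (fun hv => by rw [h.sg_W_V hv hw, map_smul, hfS hv hw, smul_zero]) hC.1
  rw [h.sg_apply_W hC hw, map_smul, hfσw, smul_zero]

theorem apply_sg_eq_zero (h : SuspensionDerivations G V W sg D) {d : ℤ} {f : Module.End ℚ Lc}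
    (hf : f ∈ G.der d) (hfV : ∀ {i : ℤ} {v : Lc}, v ∈ V i → f v = 0)
    (hfW : ∀ {j : ℤ} {w : Lc}, w ∈ W j → f w = 0)
    (hfS : ∀ {i j : ℤ} {v w : Lc}, v ∈ V i → w ∈ W j → f (sg i v w) = 0)
    (hC : C ∈ G.lieSubGrade V c) (hT : T ∈ G.lieSub W) : f (sg c C T) = 0 :=
  apply_apply_eq_zero_of_mem_lieSub hf (h.sg_mem_der hC) h.W_le hfW
    (h.apply_sg_W_eq_zero hf hfV hfS hC) hT

theorem sg_sg_W (h : SuspensionDerivations G V W sg D) (hB : B ∈ G.lieSubGrade V b)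
    (hC : C ∈ G.lieSubGrade V c) {j : ℤ} {w : Lc} (hw : w ∈ W j) : sg b B (sg c C w) = 0 :=
  h.apply_sg_W_eq_zero (h.sg_mem_der hB) (fun hv => h.sg_apply_lieSub_V hB (mem_lieSub_of_mem hv))
    (h.sg_susp hB) hC hw

theorem D_sg_W (h : SuspensionDerivations G V W sg D) (hC : C ∈ G.lieSubGrade V c) {j : ℤ}
    {w : Lc} (hw : w ∈ W j) : D (sg c C w) = G.br C w := by
  have hder := gradedCommutator_mem_der h.D_mem_der (h.sg_W_mem_der hw)
  rw [show -1 + (j + 1) = j by ring] at hder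
  have hcomm : gradedCommutator (-1) (j + 1) D (sg j w) C = (-G.br w) C := by
    refine apply_eq_apply_of_mem_lieSub hder (neg_mem (br_mem_der (h.W_le j hw))) h.V_le
      (fun {i v} hv => ?_) hC.1
    simp [gradedCommutator_apply, h.D_V hv, h.sg_W_V hv hw, h.D_susp hv hw,
      G.antisymm (h.W_le j hw) (h.V_le i hv)]
  have hDC : D C = 0 := apply_eq_zero_of_mem_lieSub h.D_mem_der h.V_le h.D_V hC.1
  have hDσw : D (sg j w C) = -G.br w C := by simpa [gradedCommutator_apply, hDC] using hcomm
  rw [h.sg_apply_W hC hw, map_smul, hDσw, G.antisymm hC.2 (h.W_le j hw), mul_comm, smul_neg]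

theorem sgBoundary_apply_lieSub_W (h : SuspensionDerivations G V W sg D)
    (hC : C ∈ G.lieSubGrade V c) (hT : T ∈ G.lieSub W) : sgBoundary sg D c C T = G.br C T :=
  apply_eq_apply_of_mem_lieSub (h.sgBoundary_mem_der hC) (br_mem_der hC.2) h.W_le
    (fun hw => by simp [sgBoundary_apply, h.D_W hw, h.D_sg_W hC hw]) hT

theorem D_sg (h : SuspensionDerivations G V W sg D) (hC : C ∈ G.lieSubGrade V c)
    (hT : T ∈ G.lieSub W) : D (sg c C T) = G.br C T := by
  simpa [sgBoundary_apply, h.D_apply_lieSub_W hT] using h.sgBoundary_apply_lieSub_W hC hT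

theorem sg_br_W (h : SuspensionDerivations G V W sg D) (hB : B ∈ G.lieSubGrade V b)
    (hC : C ∈ G.lieSubGrade V c) {j : ℤ} {w : Lc} (hw : w ∈ W j) :
    sg (b + c) (G.br B C) w =
      (-1 : ℚ) ^ (j * c) • G.br (sg b B w) C + (-1 : ℚ) ^ b • G.br B (sg c C w) := by
  simp only [h.sg_apply_W (br_mem_lieSubGrade hB hC) hw, h.sg_apply_W hB hw, h.sg_apply_W hC hw,
    apply_br_of_mem_der (h.sg_W_mem_der hw) hB.2, map_smul, LinearMap.smul_apply]
  rcases Int.even_or_odd b with hb | hb <;> rcases Int.even_or_odd c with hc | hc <;>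
    rcases Int.even_or_odd j with hj | hj <;>
    simp only [neg_one_zpow_add, zpow_mul, mul_zpow, zpow_one, one_zpow,
      hb.neg_one_zpow, hc.neg_one_zpow, hj.neg_one_zpow] <;>
    module

/-- The derivation `[δ_B, σ_C] + (-1)^|B| σ_[B,C]`, which measures the failure of the commutation
relation between `δ_B` and `σ_C`. -/
noncomputable def commutationDefect (G : GLA Lc) (sg : ℤ → Lc → Module.End ℚ Lc)
    (D : Module.End ℚ Lc) (b c : ℤ) (B C : Lc) : Module.End ℚ Lc :=
  gradedCommutator b (c + 1) (sgBoundary sg D b B) (sg c C)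
    + (-1 : ℚ) ^ b • sg (b + c) (G.br B C)

theorem commutationDefect_apply :
    commutationDefect G sg D b c B C x =
      sgBoundary sg D b B (sg c C x) - (-1 : ℚ) ^ (b * (c + 1)) • sg c C (sgBoundary sg D b B x)
        + (-1 : ℚ) ^ b • sg (b + c) (G.br B C) x := rfl

section CommutationDefect

variable (h : SuspensionDerivations G V W sg D) (hB : B ∈ G.lieSubGrade V b)
  (hC : C ∈ G.lieSubGrade V c)

include h hB hC

theorem commutationDefect_mem_der : commutationDefect G sg D b c B C ∈ G.der (b + (c + 1)) := by
  refine add_mem (gradedCommutator_mem_der (h.sgBoundary_mem_der hB) (h.sg_mem_der hC))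
    (Submodule.smul_mem _ _ ?_)
  rw [← add_assoc]
  exact h.sg_mem_der (br_mem_lieSubGrade hB hC)

theorem commutationDefect_V {i : ℤ} {v : Lc} (hv : v ∈ V i) :
    commutationDefect G sg D b c B C v = 0 := by
  have hvL : v ∈ G.lieSub V := mem_lieSub_of_mem hv
  simp [commutationDefect_apply, sgBoundary_apply, h.D_V hv, h.sg_apply_lieSub_V hB hvL,
    h.sg_apply_lieSub_V hC hvL, h.sg_apply_lieSub_V (br_mem_lieSubGrade hB hC) hvL]

theorem commutationDefect_W {j : ℤ} {w : Lc} (hw : w ∈ W j) :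
    commutationDefect G sg D b c B C w = 0 := by
  have hwL : w ∈ G.lieSub W := mem_lieSub_of_mem hw
  have hδσ : sgBoundary sg D b B (sg c C w) =
      (-1 : ℚ) ^ (b + (b + 1) * c) • G.br C (sg b B w) := by
    rw [sgBoundary_apply, h.sg_sg_W hB hC hw, h.D_sg hC hwL, h.sg_br_left hB hC, map_zero,
      zero_add, smul_smul, neg_one_zpow_add]
  rw [commutationDefect_apply, hδσ, h.sgBoundary_apply_lieSub_W hB hwL, h.sg_br_left hC hB,
    h.sg_br_W hB hC hw, G.antisymm hC.2 (apply_mem_grade_of_mem_der (h.sg_mem_der hB)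
      (h.W_le j hw))]
  rcases Int.even_or_odd b with hb | hb <;> rcases Int.even_or_odd c with hc | hc <;>
    rcases Int.even_or_odd j with hj | hj <;>
    simp only [neg_one_zpow_add, zpow_mul, mul_zpow, zpow_one, one_zpow,
      hb.neg_one_zpow, hc.neg_one_zpow, hj.neg_one_zpow] <;>
    module

theorem commutationDefect_susp {i j : ℤ} {v w : Lc} (hv : v ∈ V i) (hw : w ∈ W j) :
    commutationDefect G sg D b c B C (sg i v w) = 0 := by
  have hvL := mem_lieSubGrade_of_mem h.V_le hv
  simp [commutationDefect_apply, sgBoundary_apply, h.sg_susp hB hv hw, h.sg_susp hC hv hw,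
    h.sg_susp (br_mem_lieSubGrade hB hC) hv hw, h.D_susp hv hw, h.sg_br_left hB hvL,
    h.sg_br_left hC hvL, h.sg_sg_W hC hB hw]

end CommutationDefect

-- The correction term is written with `δ_B x - [B, x]` because that vanishes for `x ∈ 𝕃(W)`.
theorem sgBoundary_sg_of_commutationDefect_eq_zero (h : SuspensionDerivations G V W sg D)
    (hB : B ∈ G.lieSubGrade V b) (hC : C ∈ G.lieSubGrade V c)
    (hx : commutationDefect G sg D b c B C x = 0) :
    sgBoundary sg D b B (sg c C x) =
      G.br B (sg c C x) + (-1 : ℚ) ^ (b * (c + 1)) • sg c C (sgBoundary sg D b B x - G.br B x)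
        - (-1 : ℚ) ^ b • sg (b + c) (G.br B C) x := by
  have hsign : (-1 : ℚ) ^ (b * (c + 1)) * (-1) ^ ((c + 1) * b) = 1 := by
    rw [mul_comm (c + 1), ← mul_zpow]
    simp
  rw [map_sub, h.sg_br_left hC hB, smul_sub, smul_smul, hsign]
  rw [commutationDefect_apply] at hx
  linear_combination (norm := module) hx

theorem sgBoundary_sg (h : SuspensionDerivations G V W sg D) (hB : B ∈ G.lieSubGrade V b)
    (hC : C ∈ G.lieSubGrade V c) (hT : T ∈ G.lieSub W) :
    sgBoundary sg D b B (sg c C T) =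
      G.br B (sg c C T) - (-1 : ℚ) ^ b • sg (b + c) (G.br B C) T := by
  have hdefect : commutationDefect G sg D b c B C T = 0 :=
    apply_eq_zero_of_mem_lieSub (h.commutationDefect_mem_der hB hC) h.W_le
      (h.commutationDefect_W hB hC) hT
  simpa [h.sgBoundary_apply_lieSub_W hB hT] using
    h.sgBoundary_sg_of_commutationDefect_eq_zero hB hC hdefect

theorem sgBoundary_sg_sg (h : SuspensionDerivations G V W sg D) (hA : A ∈ G.lieSubGrade V a)
    (hB : B ∈ G.lieSubGrade V b) (hC : C ∈ G.lieSubGrade V c) (hT : T ∈ G.lieSub W) :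
    sgBoundary sg D a A (sg b B (sg c C T)) =
      G.br A (sg b B (sg c C T)) - (-1 : ℚ) ^ (a * b) • sg b B (sg (a + c) (G.br A C) T)
        - (-1 : ℚ) ^ a • sg (a + b) (G.br A B) (sg c C T) := by
  have hdefect : commutationDefect G sg D a b A B (sg c C T) = 0 :=
    h.apply_sg_eq_zero (h.commutationDefect_mem_der hA hB) (h.commutationDefect_V hA hB)
      (h.commutationDefect_W hA hB) (h.commutationDefect_susp hA hB) hC hT
  have hsign : (-1 : ℚ) ^ (a * (b + 1)) * (-1) ^ a = (-1) ^ (a * b) := by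
    rw [mul_add_one, neg_one_zpow_add, mul_assoc, ← mul_zpow]
    simp
  rw [h.sgBoundary_sg_of_commutationDefect_eq_zero hA hB hdefect, h.sgBoundary_sg hA hC hT,
    sub_sub_cancel_left, map_neg, map_smul, smul_neg, smul_smul, hsign, ← sub_eq_add_neg]

theorem D_sg_sg (h : SuspensionDerivations G V W sg D) (hB : B ∈ G.lieSubGrade V b)
    (hC : C ∈ G.lieSubGrade V c) (hT : T ∈ G.lieSub W) :
    D (sg b B (sg c C T)) =
      G.br B (sg c C T) - (-1 : ℚ) ^ b • sg (b + c) (G.br B C) T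
        - (-1 : ℚ) ^ (b + (b + 1) * c) • G.br C (sg b B T) := by
  have hδ := h.sgBoundary_sg hB hC hT
  rwa [sgBoundary_apply, h.D_sg hC hT, h.sg_br_left hB hC, smul_smul,
    ← neg_one_zpow_add, ← eq_sub_iff_add_eq] at hδ

theorem D_sg_sg_sg (h : SuspensionDerivations G V W sg D) (hA : A ∈ G.lieSubGrade V a)
    (hB : B ∈ G.lieSubGrade V b) (hC : C ∈ G.lieSubGrade V c) (hT : T ∈ G.lieSub W) :
    D (sg a A (sg b B (sg c C T))) =
      G.br A (sg b B (sg c C T)) - (-1 : ℚ) ^ (a * b) • sg b B (sg (a + c) (G.br A C) T)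
        - (-1 : ℚ) ^ a • sg (a + b) (G.br A B) (sg c C T)
        - (-1 : ℚ) ^ (a + (a + 1) * b) • G.br B (sg a A (sg c C T))
        + (-1 : ℚ) ^ (a + b) • sg a A (sg (b + c) (G.br B C) T)
        + (-1 : ℚ) ^ (a + b + (a + b) * c) • G.br C (sg a A (sg b B T)) := by
  have hδ := h.sgBoundary_sg_sg hA hB hC hT
  rw [sgBoundary_apply, ← eq_sub_iff_add_eq] at hδ
  simp only [hδ, h.D_sg_sg hB hC hT, map_sub, map_smul, h.sg_br_left hA hB, h.sg_br_left hA hC]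
  rcases Int.even_or_odd a with ha | ha <;> rcases Int.even_or_odd b with hb | hb <;>
    rcases Int.even_or_odd c with hc | hc <;>
    simp only [neg_one_zpow_add, zpow_mul, mul_zpow, zpow_one, one_zpow,
      ha.neg_one_zpow, hb.neg_one_zpow, hc.neg_one_zpow] <;>
    module

end SuspensionDerivations

theorem statement13_general {Lc : Type u} [AddCommGroup Lc] [Module ℚ Lc] {G : GLA Lc}
    {V W : ℤ → Submodule ℚ Lc} {sg : ℤ → Lc → Module.End ℚ Lc} {D : Module.End ℚ Lc}
    (h : SuspensionDerivations G V W sg D) (A B C : Mag V) {t : ℤ} {T : Lc}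
    (hT : T ∈ G.lieSub W) (hTt : T ∈ G.grade t) :
    (Mag.mul A (Mag.mul B C)).star G sg t T - (Mag.mul (Mag.mul A B) C).star G sg t T
        - (-1 : ℚ) ^ (A.deg * B.deg) • (Mag.mul B (Mag.mul A C)).star G sg t T
      = (-1 : ℚ) ^ B.deg •
          D (sg A.deg (A.real G) (sg B.deg (B.real G) (sg C.deg (C.real G) T))) := by
  have hA := Mag.real_mem_lieSubGrade h.V_le A
  have hB := Mag.real_mem_lieSubGrade h.V_le B
  have hC := Mag.real_mem_lieSubGrade h.V_le C
  have hsg (E : Mag V) {n : ℤ} {x : Lc} (hx : x ∈ G.grade n) :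
      sg E.deg (E.real G) x ∈ G.grade (n + (E.deg + 1)) :=
    GLA.apply_mem_grade_of_mem_der (h.sg_mem_der (Mag.real_mem_lieSubGrade h.V_le E)) hx
  rw [Mag.star_jacobiator h.V_le hsg hTt, h.D_sg_sg_sg hA hB hC hT,
    G.antisymm (hsg A (hsg B hTt)) hC.2]
  rcases Int.even_or_odd A.deg with ha | ha <;> rcases Int.even_or_odd B.deg with hb | hb <;>
    rcases Int.even_or_odd C.deg with hc | hc <;> rcases Int.even_or_odd t with ht | ht <;>
    simp only [neg_one_zpow_add, zpow_mul, mul_zpow, zpow_one, one_zpow,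
      ha.neg_one_zpow, hb.neg_one_zpow, hc.neg_one_zpow, ht.neg_one_zpow] <;>
    module

/-- Lemma 3.16.  In the dgl `(L₁, D)` built from minimal Quillen models
of 2-cones, for all `A, B, C ∈ 𝕄(V₀)` and all homogeneous `T ∈ 𝕃(W₀)`, the star product of
the Jacobiator `J(A,B,C) = A(BC) - (AB)C - (-1)^{|A||B|} B(AC)` with `T` satisfies
`J(A,B,C) ⋆ T = (-1)^{|B|} D(σ_Ā σ_B̄ σ_C̄ (T))`. -/
theorem statement13
    {Lc : Type u} [AddCommGroup Lc] [Module ℚ Lc] (G : GLA Lc)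
    (V0 V1 W0 W1 Sp : ℤ → Submodule ℚ Lc)
    -- the ambient free Lie algebra is reduced
    (hred : G.Reduced)
    (hV0 : ∀ i, V0 i ≤ G.grade i) (hV1 : ∀ i, V1 i ≤ G.grade i)
    (hW0 : ∀ i, W0 i ≤ G.grade i) (hW1 : ∀ i, W1 i ≤ G.grade i)
    (hSp : ∀ i, Sp i ≤ G.grade i)
    -- the suspension `s(v ⊗ w)`, bilinear, of degree `|v|+|w|+1`; in `L₁` only
    -- `s(V₀⊗W₀) ⊕ s(V₁⊗W₀) ⊕ s(V₀⊗W₁)` is present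
    (sus : Lc →ₗ[ℚ] Lc →ₗ[ℚ] Lc)
    (hsus00 : ∀ {i j : ℤ} {v w : Lc}, v ∈ V0 i → w ∈ W0 j → sus v w ∈ Sp (i + j + 1))
    (hsus10 : ∀ {i j : ℤ} {v w : Lc}, v ∈ V1 i → w ∈ W0 j → sus v w ∈ Sp (i + j + 1))
    (hsus01 : ∀ {i j : ℤ} {v w : Lc}, v ∈ V0 i → w ∈ W1 j → sus v w ∈ Sp (i + j + 1))
    -- `L₁` is generated by `V ⊕ W ⊕ s(V₀⊗W₀) ⊕ s(V₁⊗W₀) ⊕ s(V₀⊗W₁)`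
    (hgen : G.lieSub (fun i => V0 i ⊔ V1 i ⊔ W0 i ⊔ W1 i ⊔ Sp i) = ⊤)
    -- the derivations `σ_A` for homogeneous `A ∈ 𝕃(V ⊕ W)`
    (sg : ℤ → Lc → (Lc →ₗ[ℚ] Lc))
    (hsg_grade : ∀ {a : ℤ} {A : Lc}, A ∈ G.lieSub (fun i => V0 i ⊔ V1 i ⊔ W0 i ⊔ W1 i) →
      A ∈ G.grade a → ∀ {n : ℤ} {x : Lc}, x ∈ G.grade n → sg a A x ∈ G.grade (n + a + 1))
    (hsg_der : ∀ {a : ℤ} {A : Lc}, A ∈ G.lieSub (fun i => V0 i ⊔ V1 i ⊔ W0 i ⊔ W1 i) →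
      A ∈ G.grade a → ∀ {n : ℤ} (x y : Lc), x ∈ G.grade n →
      sg a A (G.br x y) = G.br (sg a A x) y + (-1 : ℚ) ^ ((a + 1) * n) • G.br x (sg a A y))
    (hsg_vw : ∀ {i j : ℤ} {v w : Lc}, v ∈ V0 i ⊔ V1 i → w ∈ W0 j → sg i v w = sus v w)
    (hsg_vw' : ∀ {i j : ℤ} {v w : Lc}, v ∈ V0 i → w ∈ W1 j → sg i v w = sus v w)
    (hsg_wv : ∀ {i j : ℤ} {v w : Lc}, v ∈ V0 i ⊔ V1 i → w ∈ W0 j →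
      sg j w v = (-1 : ℚ) ^ (i * j) • sus v w)
    (hsg_wv' : ∀ {i j : ℤ} {v w : Lc}, v ∈ V0 i → w ∈ W1 j →
      sg j w v = (-1 : ℚ) ^ (i * j) • sus v w)
    (hsg_vv : ∀ {i i' : ℤ} {v v' : Lc}, v ∈ V0 i ⊔ V1 i → v' ∈ V0 i' ⊔ V1 i' →
      sg i v v' = 0)
    (hsg_ww : ∀ {j j' : ℤ} {w w' : Lc}, w ∈ W0 j ⊔ W1 j → w' ∈ W0 j' ⊔ W1 j' →
      sg j w w' = 0)
    (hsg_vS : ∀ {i k : ℤ} {v x : Lc}, v ∈ V0 i ⊔ V1 i → x ∈ Sp k → sg i v x = 0)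
    (hsg_wS : ∀ {j k : ℤ} {w x : Lc}, w ∈ W0 j ⊔ W1 j → x ∈ Sp k → sg j w x = 0)
    (hsg_Av : ∀ {a : ℤ} {A : Lc}, A ∈ G.lieSub (fun i => V0 i ⊔ V1 i ⊔ W0 i ⊔ W1 i) →
      A ∈ G.grade a → ∀ {i : ℤ} {v : Lc}, v ∈ V0 i ⊔ V1 i →
      sg a A v = (-1 : ℚ) ^ (i * a) • sg i v A)
    (hsg_Aw : ∀ {a : ℤ} {A : Lc}, A ∈ G.lieSub (fun i => V0 i ⊔ V1 i ⊔ W0 i ⊔ W1 i) →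
      A ∈ G.grade a → ∀ {j : ℤ} {w : Lc}, w ∈ W0 j ⊔ W1 j →
      sg a A w = (-1 : ℚ) ^ (j * a) • sg j w A)
    (hsg_AS : ∀ {a : ℤ} {A : Lc}, A ∈ G.lieSub (fun i => V0 i ⊔ V1 i ⊔ W0 i ⊔ W1 i) →
      A ∈ G.grade a → ∀ {k : ℤ} {x : Lc}, x ∈ Sp k → sg a A x = 0)
    -- the degree `-1` derivation `D` of `L₁`
    (D : Lc →ₗ[ℚ] Lc)
    (hD_grade : ∀ {i : ℤ} {x : Lc}, x ∈ G.grade i → D x ∈ G.grade (i - 1))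
    (hD_der : ∀ {i : ℤ} (x y : Lc), x ∈ G.grade i →
      D (G.br x y) = G.br (D x) y + (-1 : ℚ) ^ ((-1 : ℤ) * i) • G.br x (D y))
    -- `D = ∂_V` on `V`, `D = ∂_W` on `W`, with `∂(V₀) = ∂(W₀) = 0`,
    -- `∂(V₁) ⊆ 𝕃(V₀)` and `∂(W₁) ⊆ 𝕃(W₀)`
    (hD_V0 : ∀ {i : ℤ} {v : Lc}, v ∈ V0 i → D v = 0)
    (hD_W0 : ∀ {j : ℤ} {w : Lc}, w ∈ W0 j → D w = 0)
    (hD_V1 : ∀ {i : ℤ} {v : Lc}, v ∈ V1 i → D v ∈ G.lieSub V0)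
    (hD_W1 : ∀ {j : ℤ} {w : Lc}, w ∈ W1 j → D w ∈ G.lieSub W0)
    -- minimality of the two Quillen models
    (hD_V1dec : ∀ {i : ℤ} {v : Lc}, v ∈ V1 i → D v ∈ G.dec)
    (hD_W1dec : ∀ {j : ℤ} {w : Lc}, w ∈ W1 j → D w ∈ G.dec)
    -- the value of `D` on the suspension generators
    (hD_sus00 : ∀ {i j : ℤ} {v w : Lc}, v ∈ V0 i → w ∈ W0 j → D (sus v w) = G.br v w)
    (hD_sus10 : ∀ {i j : ℤ} {v w : Lc}, v ∈ V1 i → w ∈ W0 j →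
      D (sus v w) = G.br v w - (-1 : ℚ) ^ ((i + 1) * j) • sg j w (D v))
    (hD_sus01 : ∀ {i j : ℤ} {v w : Lc}, v ∈ V0 i → w ∈ W1 j →
      D (sus v w) = G.br v w - (-1 : ℚ) ^ i • sg i v (D w))
    -- `(L₁, D)` is a dgl
    (hDD : ∀ x : Lc, D (D x) = 0)
 :
    ∀ (A B C : Mag V0) {t : ℤ} {T : Lc}, T ∈ G.lieSub W0 → T ∈ G.grade t →
      Mag.star G sg t (Mag.mul A (Mag.mul B C)) T
        - Mag.star G sg t (Mag.mul (Mag.mul A B) C) T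
        - (-1 : ℚ) ^ (Mag.deg A * Mag.deg B) • Mag.star G sg t (Mag.mul B (Mag.mul A C)) T
      = (-1 : ℚ) ^ (Mag.deg B) •
          D (sg (Mag.deg A) (Mag.real G A)
              (sg (Mag.deg B) (Mag.real G B) (sg (Mag.deg C) (Mag.real G C) T))) := by
  have hV {i : ℤ} {v : Lc} (hv : v ∈ V0 i) : v ∈ V0 i ⊔ V1 i := Submodule.mem_sup_left hv
  have hW {j : ℤ} {w : Lc} (hw : w ∈ W0 j) : w ∈ W0 j ⊔ W1 j := Submodule.mem_sup_left hw
  have hLV : G.lieSub V0 ≤ G.lieSub fun i => V0 i ⊔ V1 i ⊔ W0 i ⊔ W1 i :=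
    GLA.lieSub_mono fun _ => le_sup_left.trans (le_sup_left.trans le_sup_left)
  have hLW : G.lieSub W0 ≤ G.lieSub fun i => V0 i ⊔ V1 i ⊔ W0 i ⊔ W1 i :=
    GLA.lieSub_mono fun _ => le_sup_right.trans le_sup_left
  have sg_der {a : ℤ} {A : Lc} (hA : A ∈ G.lieSubGrade (fun i => V0 i ⊔ V1 i ⊔ W0 i ⊔ W1 i) a) :
      sg a A ∈ G.der (a + 1) :=
    ⟨fun n _ hx => add_assoc n a 1 ▸ hsg_grade hA.1 hA.2 hx,
      fun _ x hx y => hsg_der hA.1 hA.2 x y hx⟩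
  exact statement13_general
    { V_le := hV0
      W_le := hW0
      sg_mem_der := fun hA => sg_der ⟨hLV hA.1, hA.2⟩
      sg_W_mem_der := fun hw => sg_der ⟨hLW (GLA.mem_lieSub_of_mem hw), hW0 _ hw⟩
      sg_V_V := fun hv hv' => hsg_vv (hV hv) (hV hv')
      sg_apply_V := fun hA hv => hsg_Av (hLV hA.1) hA.2 (hV hv)
      sg_apply_W := fun hA hw => hsg_Aw (hLV hA.1) hA.2 (hW hw)
      sg_susp := fun hA hv hw => by
        rw [hsg_vw (hV hv) hw]; exact hsg_AS (hLV hA.1) hA.2 (hsus00 hv hw)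
      D_mem_der := ⟨fun _ _ hx => hD_grade hx, fun _ x hx y => hD_der x y hx⟩
      D_V := hD_V0
      D_W := hD_W0
      D_susp := fun hv hw => by rw [hsg_vw (hV hv) hw, hD_sus00 hv hw] }
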